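/- For all integers v, k, t, y, s with 0 ≤ t ≤ k ≤ v, 0 ≤ s ≤ k+y, and y ≥ 0, the covering number satisfies the Morley–van Rees direct-product bound C(2v+y, v+k+y, t+s+1) ≤ C(v,k,t) + C(v+y, k+y, s). -/

import Mathlib

/-- A `(v,k,t)` covering design: a family of `k`-element subsets (blocks) of a
`v`-element set such that every `t`-element subset is contained in at least one block. -/
def IsCoverDesign (v k t : ℕ) (B : Finset (Finset (Fin v))) : Prop :=
  (∀ b ∈ B, b.card = k) ∧
  ∀ s : Finset (Fin v), s.card = t → ∃ b ∈ B, s ⊆ b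

/-- `coverNumber v k t` is `C(v,k,t)`, the minimum number of blocks in a
`(v,k,t)` covering design. -/
noncomputable def coverNumber (v k t : ℕ) : ℕ :=
  sInf {n : ℕ | ∃ B : Finset (Finset (Fin v)), IsCoverDesign v k t B ∧ B.card = n}

/-!
Take optimal coverings of two disjoint point sets, with parameters `t` and `s`. Enlarge every
block of each covering by the whole of the other point set; the enlarged blocks all have the same
size because `k + (v + y) = v + (k + y)`. A set of `t + s + 1` points has either at most `t` points
in the first set or at most `s` points in the second, so the corresponding covering provides an
enlarged block containing it.
-/

open Finset

section Covering

variable {α β : Type*} {k l t s : ℕ}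

/-- A covering design with block size `k` and strength `t` on an arbitrary point set `α`. On
`Fin v` this unfolds to `IsCoverDesign v k t`; allowing any type lets designs live on disjoint
unions `α ⊕ β`. -/
def IsCovering (k t : ℕ) (B : Finset (Finset α)) : Prop :=
  (∀ b ∈ B, #b = k) ∧ ∀ T : Finset α, #T = t → ∃ b ∈ B, T ⊆ b

theorem isCovering_powersetCard_univ [Fintype α] (htk : t ≤ k) (hk : k ≤ Fintype.card α) :
    IsCovering k t (powersetCard k (univ : Finset α)) := by
  refine ⟨fun b hb ↦ (mem_powersetCard.mp hb).2, fun T hT ↦ ?_⟩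
  obtain ⟨b, hTb, hb⟩ := exists_superset_card_eq (hT.trans_le htk) hk
  exact ⟨b, mem_powersetCard_univ.mpr hb, hTb⟩

theorem exists_isCovering_card_eq_coverNumber {v : ℕ} (htk : t ≤ k) (hkv : k ≤ v) :
    ∃ B : Finset (Finset (Fin v)), IsCovering k t B ∧ #B = coverNumber v k t :=
  Nat.sInf_mem (s := {n | ∃ B : Finset (Finset (Fin v)), IsCoverDesign v k t B ∧ #B = n})
    ⟨_, _, isCovering_powersetCard_univ htk (by rwa [Fintype.card_fin]), rfl⟩

namespace IsCovering

theorem exists_superset_of_card_le [Fintype α] {B : Finset (Finset α)} (hB : IsCovering k t B)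
    (ht : t ≤ Fintype.card α) {T : Finset α} (hT : #T ≤ t) : ∃ b ∈ B, T ⊆ b := by
  obtain ⟨S, hTS, hS⟩ := exists_superset_card_eq hT ht
  obtain ⟨b, hb, hSb⟩ := hB.2 S hS
  exact ⟨b, hb, hTS.trans hSb⟩

theorem map_equiv {B : Finset (Finset α)} (hB : IsCovering k t B) (e : α ≃ β) :
    IsCovering k t (B.map e.finsetCongr.toEmbedding) := by
  refine ⟨forall_mem_map.mpr fun b hb ↦ (card_map _).trans (hB.1 b hb), fun T hT ↦ ?_⟩
  obtain ⟨b, hb, hTb⟩ := hB.2 (T.map e.symm.toEmbedding) ((card_map _).trans hT)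
  exact ⟨e.finsetCongr b, mem_map_of_mem _ hb, map_symm_subset.mp hTb⟩

theorem coverNumber_le_card [Fintype α] {B : Finset (Finset α)} (hB : IsCovering k t B) :
    coverNumber (Fintype.card α) k t ≤ #B :=
  Nat.sInf_le ⟨_, hB.map_equiv (Fintype.equivFin α), card_map _⟩

end IsCovering

section DirectProduct

variable [Fintype α] [Fintype β] [DecidableEq α] [DecidableEq β]
  {B₁ : Finset (Finset α)} {B₂ : Finset (Finset β)}

/-- The Morley–van Rees direct product of two families of blocks: on the disjoint union of the
point sets, each block of one family is enlarged by all points of the other set. -/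
def directProduct (B₁ : Finset (Finset α)) (B₂ : Finset (Finset β)) : Finset (Finset (α ⊕ β)) :=
  B₁.image (·.disjSum univ) ∪ B₂.image (univ.disjSum ·)

theorem mem_directProduct {b : Finset (α ⊕ β)} :
    b ∈ directProduct B₁ B₂ ↔
      (∃ b₁ ∈ B₁, b₁.disjSum univ = b) ∨ ∃ b₂ ∈ B₂, univ.disjSum b₂ = b := by
  simp only [directProduct, mem_union, mem_image]

theorem card_directProduct_le : #(directProduct B₁ B₂) ≤ #B₁ + #B₂ :=
  (card_union_le _ _).trans (add_le_add card_image_le card_image_le)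

theorem IsCovering.directProduct (h₁ : IsCovering k t B₁) (h₂ : IsCovering l s B₂)
    (ht : t ≤ Fintype.card α) (hs : s ≤ Fintype.card β)
    (hkl : k + Fintype.card β = Fintype.card α + l) :
    IsCovering (k + Fintype.card β) (t + s + 1) (directProduct B₁ B₂) := by
  refine ⟨fun b hb ↦ ?_, fun T hT ↦ ?_⟩
  · rcases mem_directProduct.mp hb with ⟨b₁, hb₁, rfl⟩ | ⟨b₂, hb₂, rfl⟩
    · rw [card_disjSum, h₁.1 b₁ hb₁, card_univ]
    · rw [card_disjSum, h₂.1 b₂ hb₂, card_univ, hkl]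
  · have hsplit : #T.toLeft ≤ t ∨ #T.toRight ≤ s := by
      have := T.card_toLeft_add_card_toRight
      omega
    rcases hsplit with hleft | hright
    · obtain ⟨b, hb, hTb⟩ := h₁.exists_superset_of_card_le ht hleft
      exact ⟨b.disjSum univ, mem_directProduct.mpr (.inl ⟨b, hb, rfl⟩),
        subset_disjSum.mpr ⟨hTb, subset_univ _⟩⟩
    · obtain ⟨b, hb, hTb⟩ := h₂.exists_superset_of_card_le hs hright
      exact ⟨univ.disjSum b, mem_directProduct.mpr (.inr ⟨b, hb, rfl⟩),
        subset_disjSum.mpr ⟨subset_univ _, hTb⟩⟩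

end DirectProduct

end Covering

/-- The Morley–van Rees direct-product bound:
`C(2v+y, v+k+y, t+s+1) ≤ C(v,k,t) + C(v+y,k+y,s)`. -/
theorem morley_van_rees (v k t y s : ℕ) (htk : t ≤ k) (hkv : k ≤ v) (hs : s ≤ k + y) :
    coverNumber (2 * v + y) (v + k + y) (t + s + 1) ≤
      coverNumber v k t + coverNumber (v + y) (k + y) s := by
  obtain ⟨B₁, hB₁, hcard₁⟩ := exists_isCovering_card_eq_coverNumber htk hkv
  obtain ⟨B₂, hB₂, hcard₂⟩ :=
    exists_isCovering_card_eq_coverNumber hs (Nat.add_le_add_right hkv y)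
  have hprod := hB₁.directProduct hB₂ (by simp only [Fintype.card_fin]; omega)
    (by simp only [Fintype.card_fin]; omega) (by simp only [Fintype.card_fin]; omega)
  have hpoints : Fintype.card (Fin v ⊕ Fin (v + y)) = 2 * v + y := by
    simp only [Fintype.card_sum, Fintype.card_fin]
    omega
  have hblock : k + Fintype.card (Fin (v + y)) = v + k + y := by
    simp only [Fintype.card_fin]
    omega
  calc
    coverNumber (2 * v + y) (v + k + y) (t + s + 1) ≤ #(directProduct B₁ B₂) := by
      simpa only [hpoints, hblock] using hprod.coverNumber_le_card
    _ ≤ #B₁ + #B₂ := card_directProduct_le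
    _ = coverNumber v k t + coverNumber (v + y) (k + y) s := by rw [hcard₁, hcard₂]
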